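/- Let N ∈ ℕ and let q ∈ ℂ satisfy (q;q)_{2N} ≠ 0. Then Σ_{n=0}^{N} q^{2n} / (q;q)_{2n} = 1/(q;q)_{2N} · Σ_{n=0}^{N} [N,n]_{q^2} (−1)^n (q^2;q^2)_n q^{n^2}, where [N,n]_{q^2} denotes the Gaussian binomial coefficient in base q^2. -/

import Mathlib

/-!
Clearing the denominators of the Gaussian binomials turns the right-hand sum into
`S_N = ∑_{n ≤ N} t_{N,n}` with `t_{N,n} = (-1)^n q^{n²} ∏_{i<n} (1 - q^{2(N-i)})` (`fineTerm`,
`qBinom_term`). Let `L_N = (q;q)_{2N} ∑_{n ≤ N} q^{2n} / (q;q)_{2n}`; clearly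
`L_{N+1} = (1 - q^{2N+1})(1 - q^{2N+2}) L_N + q^{2N+2}`, and the point is that `S_N` satisfies the
same recurrence (`sum_fineTerm_succ`).

Indeed `t_{N+1,n+1} = -(1 - q^{2N+2}) q^{2n+1} t_{N,n}` expresses `S_{N+1}` through the sum
`∑ q^{2n+1} t_{N,n}`, while `t_{N,n+1} = -(q^{2n+1} - q^{2N+1}) t_{N,n}` makes
`∑ (1 + q^{2n+1} - q^{2N+1}) t_{N,n}` telescope to `t_{N,0} - t_{N,N+1} = 1`
(`sum_fineTerm_telescope`), which relates that sum to `S_N`.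
-/

open Finset

/-- The q-Pochhammer symbol (z; q)_n = prod_{j=0}^{n-1} (1 - z q^j). -/
noncomputable def qPoch (q z : ℂ) (n : ℕ) : ℂ :=
  ∏ j ∈ Finset.range n, (1 - z * q ^ j)

/-- The Gaussian binomial coefficient [N, n]_q = (q;q)_N / ((q;q)_n (q;q)_{N-n}). -/
noncomputable def qBinom (q : ℂ) (N n : ℕ) : ℂ :=
  qPoch q q N / (qPoch q q n * qPoch q q (N - n))

/-- The finite analogue of Fine's function,
F_N(a, b; t) = sum_{n=0}^{N} [N,n]_q (aq;q)_n (t;q)_{N-n} (q;q)_n t^n / ((bq;q)_n (t;q)_N). -/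
noncomputable def fineF (q a b t : ℂ) (N : ℕ) : ℂ :=
  ∑ n ∈ Finset.range (N + 1),
    qBinom q N n * (qPoch q (a * q) n * qPoch q t (N - n) * qPoch q q n * t ^ n) /
      (qPoch q (b * q) n * qPoch q t N)

/-- The term `(-1)^n q^{n²} ∏_{i<n} (1 - q^{2(N-i)})`. The subtraction is the one of `ℕ`, so the
term vanishes for `n > N`, the factor at `i = N` being `1 - q^0`. -/
noncomputable def fineTerm (q : ℂ) (N n : ℕ) : ℂ :=
  (-1) ^ n * q ^ (n ^ 2) * ∏ i ∈ Finset.range n, (1 - q ^ (2 * (N - i)))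

lemma fineTerm_zero (q : ℂ) (N : ℕ) : fineTerm q N 0 = 1 := by
  simp [fineTerm]

lemma fineTerm_succ (q : ℂ) {N n : ℕ} (h : n ≤ N) :
    fineTerm q N (n + 1) = -(q ^ (2 * n + 1) - q ^ (2 * N + 1)) * fineTerm q N n := by
  obtain ⟨m, rfl⟩ := Nat.exists_eq_add_of_le h
  simp only [fineTerm, Finset.prod_range_succ, Nat.add_sub_cancel_left]
  ring

lemma fineTerm_succ_succ (q : ℂ) (N n : ℕ) :
    fineTerm q (N + 1) (n + 1) =
      -(1 - q ^ (2 * N + 2)) * (q ^ (2 * n + 1) * fineTerm q N n) := by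
  simp only [fineTerm, Finset.prod_range_succ', Nat.add_sub_add_right, Nat.sub_zero]
  ring

lemma sum_fineTerm_telescope (q : ℂ) (N : ℕ) :
    ∑ n ∈ Finset.range (N + 1), (1 + q ^ (2 * n + 1) - q ^ (2 * N + 1)) * fineTerm q N n = 1 := by
  have h : ∀ n ∈ Finset.range (N + 1),
      (1 + q ^ (2 * n + 1) - q ^ (2 * N + 1)) * fineTerm q N n =
        fineTerm q N n - fineTerm q N (n + 1) := by
    intro n hn
    rw [fineTerm_succ q (Nat.lt_succ_iff.mp (Finset.mem_range.mp hn))]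
    ring
  rw [Finset.sum_congr rfl h, Finset.sum_range_sub', fineTerm_zero, fineTerm_succ q le_rfl]
  ring

lemma sum_fineTerm_succ (q : ℂ) (N : ℕ) :
    ∑ n ∈ Finset.range (N + 2), fineTerm q (N + 1) n =
      (1 - q ^ (2 * N + 1)) * (1 - q ^ (2 * N + 2)) * ∑ n ∈ Finset.range (N + 1), fineTerm q N n
        + q ^ (2 * N + 2) := by
  have h := sum_fineTerm_telescope q N
  have h' : ∑ n ∈ Finset.range (N + 1), (1 + q ^ (2 * n + 1) - q ^ (2 * N + 1)) * fineTerm q N n =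
      (1 - q ^ (2 * N + 1)) * ∑ n ∈ Finset.range (N + 1), fineTerm q N n
        + ∑ n ∈ Finset.range (N + 1), q ^ (2 * n + 1) * fineTerm q N n := by
    rw [Finset.mul_sum, ← Finset.sum_add_distrib]
    exact Finset.sum_congr rfl fun n _ => by ring
  rw [h'] at h
  rw [Finset.sum_range_succ', fineTerm_zero]
  simp only [fineTerm_succ_succ]
  rw [← Finset.mul_sum]
  linear_combination -(1 - q ^ (2 * N + 2)) * h

lemma qPoch_succ (q z : ℂ) (n : ℕ) : qPoch q z (n + 1) = qPoch q z n * (1 - z * q ^ n) :=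
  Finset.prod_range_succ _ _

lemma qPoch_two_mul_succ (q : ℂ) (N : ℕ) :
    qPoch q q (2 * (N + 1)) =
      qPoch q q (2 * N) * ((1 - q ^ (2 * N + 1)) * (1 - q ^ (2 * N + 2))) := by
  rw [show 2 * (N + 1) = 2 * N + 1 + 1 by ring, qPoch_succ, qPoch_succ]
  ring

/-- The factors of `(q²;q²)_N` are among those of `(q;q)_{2N}`. -/
lemma qPoch_sq_ne_zero (q : ℂ) (N : ℕ) (hq : qPoch q q (2 * N) ≠ 0) :
    qPoch (q ^ 2) (q ^ 2) N ≠ 0 := by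
  induction N with
  | zero => simp [qPoch]
  | succ N ih =>
    rw [qPoch_two_mul_succ] at hq
    obtain ⟨h0, h12⟩ := mul_ne_zero_iff.mp hq
    rw [qPoch_succ, show q ^ 2 * (q ^ 2) ^ N = q ^ (2 * N + 2) by ring]
    exact mul_ne_zero (ih h0) (mul_ne_zero_iff.mp h12).2

lemma qPoch_sq_split (q : ℂ) (m n : ℕ) :
    qPoch (q ^ 2) (q ^ 2) (m + n) =
      qPoch (q ^ 2) (q ^ 2) m * ∏ i ∈ Finset.range n, (1 - q ^ (2 * (m + n - i))) := by
  induction n with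
  | zero => simp
  | succ n ih =>
    rw [← add_assoc, qPoch_succ, ih, Finset.prod_range_succ']
    simp only [Nat.add_sub_add_right, Nat.sub_zero]
    ring

lemma qBinom_term (q : ℂ) {N n : ℕ} (h : n ≤ N) (hN : qPoch (q ^ 2) (q ^ 2) N ≠ 0) :
    qBinom (q ^ 2) N n * (-1) ^ n * qPoch (q ^ 2) (q ^ 2) n * q ^ (n ^ 2) = fineTerm q N n := by
  obtain ⟨m, rfl⟩ := Nat.exists_eq_add_of_le' h
  have hm : qPoch (q ^ 2) (q ^ 2) m ≠ 0 := by
    rw [qPoch_sq_split] at hN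
    exact left_ne_zero_of_mul hN
  have hn : qPoch (q ^ 2) (q ^ 2) n ≠ 0 := by
    rw [add_comm, qPoch_sq_split] at hN
    exact left_ne_zero_of_mul hN
  rw [qBinom, Nat.add_sub_cancel, qPoch_sq_split, fineTerm]
  field_simp

lemma qPoch_mul_sum (q : ℂ) (N : ℕ) (hq : qPoch q q (2 * N) ≠ 0) :
    qPoch q q (2 * N) * ∑ n ∈ Finset.range (N + 1), q ^ (2 * n) / qPoch q q (2 * n) =
      ∑ n ∈ Finset.range (N + 1), fineTerm q N n := by
  induction N with
  | zero => simp [qPoch, fineTerm]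
  | succ N ih =>
    have h0 : qPoch q q (2 * N) ≠ 0 := by
      rw [qPoch_two_mul_succ] at hq
      exact left_ne_zero_of_mul hq
    rw [sum_fineTerm_succ, ← ih h0, Finset.sum_range_succ, mul_add, mul_div_cancel₀ _ hq,
      qPoch_two_mul_succ]
    ring

theorem poch_sum_q_squared (N : ℕ) (q : ℂ) (hq : qPoch q q (2 * N) ≠ 0) :
    ∑ n ∈ Finset.range (N + 1), q ^ (2 * n) / qPoch q q (2 * n) =
      1 / qPoch q q (2 * N) *
        ∑ n ∈ Finset.range (N + 1),
          qBinom (q ^ 2) N n * (-1) ^ n * qPoch (q ^ 2) (q ^ 2) n * q ^ (n ^ 2) := by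
  rw [Finset.sum_congr rfl fun n hn => qBinom_term q
      (Nat.lt_succ_iff.mp (Finset.mem_range.mp hn)) (qPoch_sq_ne_zero q N hq),
    ← qPoch_mul_sum q N hq, ← mul_assoc, one_div_mul_cancel hq, one_mul]
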